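/- Let f: A → B be a homomorphism of MV-algebras, and let S(f): S(A) → S(B) be the induced homomorphism [a] ↦ [f(a)]. Then the canonical homomorphism A → {(b,u) ∈ B × S(A) : η_B(b) = S(f)(u)}, a ↦ (f(a), [a]), is an isomorphism (i.e. the naturality square of η at f is a pullback, so f is a trivial extension for the Galois structure of the semisimple reflection) if and only if P(f): P(A) → P(B) is an isomorphism, or (Rad(A)={0}, A is nontrivial, and B is trivial). -/

import Mathlib

namespace MVPaper

/-- An MV-algebra: a set with a binary `⊕`, a unary `¬`, and a constant `0`
satisfying the MV-algebra axioms. -/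
class MV (α : Type*) where
  oplus : α → α → α
  neg : α → α
  zero : α
  oplus_assoc : ∀ x y z : α, oplus x (oplus y z) = oplus (oplus x y) z
  oplus_comm : ∀ x y : α, oplus x y = oplus y x
  oplus_zero : ∀ x : α, oplus x zero = x
  neg_neg : ∀ x : α, neg (neg x) = x
  oplus_neg_zero : ∀ x : α, oplus x (neg zero) = neg zero
  lukasiewicz : ∀ x y : α,
    oplus (neg (oplus (neg x) y)) y = oplus (neg (oplus (neg y) x)) x

namespace MV

variable {α : Type*} [MV α]

/-- `1 := ¬0`. -/
def one : α := neg zero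

/-- `x ⊙ y := ¬(¬x ⊕ ¬y)`. -/
def odot (x y : α) : α := neg (oplus (neg x) (neg y))

/-- `x ⊖ y := ¬(¬x ⊕ y)`. -/
def ominus (x y : α) : α := neg (oplus (neg x) y)

/-- `d(x,y) := (x ⊖ y) ⊕ (y ⊖ x)`. -/
def dist (x y : α) : α := oplus (ominus x y) (ominus y x)

/-- The natural order: `x ≤ y` iff `¬x ⊕ y = 1`. -/
def le (x y : α) : Prop := oplus (neg x) y = one

/-- `x ∨ y := (x ⊖ y) ⊕ y`. -/
def sup (x y : α) : α := oplus (ominus x y) y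

/-- `x ∧ y := x ⊙ (¬x ⊕ y)`. -/
def inf (x y : α) : α := odot x (oplus (neg x) y)

/-- `n · a`, the `n`-fold sum `a ⊕ ⋯ ⊕ a`. -/
def nsmul : ℕ → α → α
  | 0, _ => zero
  | n + 1, a => oplus a (nsmul n a)

end MV

/-- Products of MV-algebras, with componentwise operations. -/
instance prodMV {α β : Type*} [MV α] [MV β] : MV (α × β) where
  oplus x y := (MV.oplus x.1 y.1, MV.oplus x.2 y.2)
  neg x := (MV.neg x.1, MV.neg x.2)
  zero := (MV.zero, MV.zero)
  oplus_assoc x y z :=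
    congrArg₂ Prod.mk (MV.oplus_assoc _ _ _) (MV.oplus_assoc _ _ _)
  oplus_comm x y :=
    congrArg₂ Prod.mk (MV.oplus_comm _ _) (MV.oplus_comm _ _)
  oplus_zero x := by
    obtain ⟨a, b⟩ := x
    exact congrArg₂ Prod.mk (MV.oplus_zero a) (MV.oplus_zero b)
  neg_neg x := by
    obtain ⟨a, b⟩ := x
    exact congrArg₂ Prod.mk (MV.neg_neg a) (MV.neg_neg b)
  oplus_neg_zero x :=
    congrArg₂ Prod.mk (MV.oplus_neg_zero _) (MV.oplus_neg_zero _)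
  lukasiewicz x y :=
    congrArg₂ Prod.mk (MV.lukasiewicz _ _) (MV.lukasiewicz _ _)

/-- A homomorphism of MV-algebras: a map preserving `⊕`, `¬` and `0`. -/
structure IsHom {α β : Type*} [MV α] [MV β] (f : α → β) : Prop where
  map_zero : f MV.zero = MV.zero
  map_oplus : ∀ x y : α, f (MV.oplus x y) = MV.oplus (f x) (f y)
  map_neg : ∀ x : α, f (MV.neg x) = MV.neg (f x)

/-- An ideal of an MV-algebra: contains `0`, closed under `⊕`, downward closed. -/
structure IsIdeal {α : Type*} [MV α] (I : Set α) : Prop where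
  zero_mem : MV.zero ∈ I
  oplus_mem : ∀ ⦃x⦄, x ∈ I → ∀ ⦃y⦄, y ∈ I → MV.oplus x y ∈ I
  lower_mem : ∀ ⦃x⦄, x ∈ I → ∀ ⦃y⦄, MV.le y x → y ∈ I

/-- The kernel of a homomorphism. -/
def ker {α β : Type*} [MV α] [MV β] (f : α → β) : Set α := {x | f x = MV.zero}

/-- The radical of an MV-algebra: `Rad(A) = {a | n·a ≤ ¬a for all n}`
(the intersection of all maximal proper ideals). -/
def Rad (α : Type*) [MV α] : Set α :=
  {a | ∀ n : ℕ, MV.le (MV.nsmul n a) (MV.neg a)}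

/-- `P(A) := Rad(A) ∪ ¬Rad(A)`. -/
def PSet (α : Type*) [MV α] : Set α :=
  Rad α ∪ {x | MV.neg x ∈ Rad α}

/-- An MV-algebra is trivial if `0 = 1`. -/
def IsTrivial (α : Type*) [MV α] : Prop := (MV.zero : α) = MV.one

/-- An MV-algebra is semisimple if its radical is trivial. -/
def Semisimple (α : Type*) [MV α] : Prop := Rad α = ({MV.zero} : Set α)

/-- An MV-algebra is perfect if `A = Rad(A) ∪ ¬Rad(A)`. -/
def Perfect (α : Type*) [MV α] : Prop := ∀ a : α, a ∈ PSet α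

/-- `q : α → Q` realizes `Q` as the quotient of `α` by the ideal `I`,
i.e. by the congruence `x ∼ y ↔ d(x,y) ∈ I`. -/
structure IsQuotientBy {α Q : Type*} [MV α] [MV Q] (I : Set α) (q : α → Q) : Prop where
  hom : IsHom q
  surj : Function.Surjective q
  eq_iff : ∀ x y : α, q x = q y ↔ MV.dist x y ∈ I

/-!
Two elements with the same image in a quotient by `I` differ, in both directions of `⊖`, by elements
of `I`, and `b` is recovered from `a` as `(a ⊖ (a ⊖ b)) ⊕ (b ⊖ a)`. Hence the square formed by `f`
and two quotient maps is a pullback exactly when `f` is a bijection between the ideals, here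
`Rad(A)` and `Rad(B)`.

If `B` is nontrivial, then `Rad(B)` and `¬Rad(B)` are disjoint, so `f` is bijective between the
radicals exactly when it is bijective between the sets `Rad ∪ ¬Rad`. If `B` is trivial, then
`Rad(A) → Rad(B)` is bijective exactly when `Rad(A) = {0}`, whereas `P(f)` identifies `0` with `1`
and is therefore bijective exactly when `A` is trivial; this is where the exceptional case comes
from.
-/

open Set

theorem bijOn_iff_subsingleton {α β : Type*} [Subsingleton β] {f : α → β} {s : Set α} {t : Set β}
    (hs : s.Nonempty) (ht : t.Nonempty) : BijOn f s t ↔ s.Subsingleton := by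
  constructor
  · exact fun h _ hx _ hy => h.injOn hx hy (Subsingleton.elim _ _)
  · intro h
    rw [Subsingleton.eq_univ_of_nonempty ht]
    exact ⟨mapsTo_univ f s, h.injOn f, (Subsingleton.eq_univ_of_nonempty (hs.image f)).ge⟩

namespace MV

variable {α : Type*} [MV α]

theorem zero_oplus (x : α) : oplus zero x = x := by
  rw [oplus_comm, oplus_zero]

theorem neg_one : neg (one : α) = zero :=
  neg_neg zero

theorem oplus_one (x : α) : oplus x one = one :=
  oplus_neg_zero x

theorem neg_oplus_self (x : α) : oplus (neg x) x = one := by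
  have h := lukasiewicz one x
  rwa [neg_one, zero_oplus, oplus_one] at h

theorem ominus_self (x : α) : ominus x x = zero := by
  rw [ominus, neg_oplus_self, neg_one]

theorem ominus_zero (x : α) : ominus x zero = x := by
  rw [ominus, oplus_zero, neg_neg]

theorem zero_ominus (x : α) : ominus zero x = zero := by
  rw [ominus, oplus_comm, oplus_neg_zero, neg_neg]

theorem dist_zero (x : α) : dist x zero = x := by
  rw [dist, ominus_zero, zero_ominus, oplus_zero]

theorem eq_of_ominus_eq_zero {x y : α} (hxy : ominus x y = zero) (hyx : ominus y x = zero) :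
    x = y :=
  calc
    x = oplus (ominus y x) x := by rw [hyx, zero_oplus]
    _ = oplus (ominus x y) y := lukasiewicz y x
    _ = y := by rw [hxy, zero_oplus]

theorem ominus_ominus_comm (x y : α) : ominus x (ominus x y) = ominus y (ominus y x) := by
  have h := lukasiewicz (neg y) (neg x)
  rw [neg_neg, neg_neg] at h
  simp only [ominus]
  rw [oplus_comm (neg x) y, oplus_comm (neg y) x, oplus_comm (neg x), oplus_comm (neg y), h]

theorem ominus_ominus_self (x y : α) : ominus (ominus x y) x = zero := by
  simp only [ominus]
  rw [neg_neg, oplus_comm (neg x) y, ← oplus_assoc, neg_oplus_self, oplus_one, neg_one]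

theorem ominus_ominus_oplus_ominus (x y : α) :
    oplus (ominus x (ominus x y)) (ominus y x) = y :=
  calc
    oplus (ominus x (ominus x y)) (ominus y x)
        = oplus (ominus y (ominus y x)) (ominus y x) := by rw [ominus_ominus_comm]
    _ = oplus (ominus (ominus y x) y) y := lukasiewicz y (ominus y x)
    _ = y := by rw [ominus_ominus_self, zero_oplus]

end MV

theorem IsTrivial.subsingleton {α : Type*} [MV α] (h : IsTrivial α) : Subsingleton α := by
  have eq_one (x : α) : x = MV.one := by rw [← MV.oplus_zero x, h, MV.oplus_one]
  exact ⟨fun x y => (eq_one x).trans (eq_one y).symm⟩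

section Rad

variable {α : Type*} [MV α]

theorem zero_mem_rad : MV.zero ∈ Rad α :=
  fun n => MV.oplus_neg_zero (MV.neg (MV.nsmul n MV.zero))

theorem zero_mem_pSet : MV.zero ∈ PSet α :=
  Or.inl zero_mem_rad

theorem one_mem_pSet : MV.one ∈ PSet α := by
  refine Or.inr ?_
  rw [mem_ofPred_eq, MV.neg_one]
  exact zero_mem_rad

theorem IsTrivial.rad_eq_singleton (h : IsTrivial α) : Rad α = {MV.zero} :=
  have := h.subsingleton
  (subsingleton_iff_singleton zero_mem_rad).1 subsingleton_of_subsingleton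

theorem pSet_subsingleton_iff : (PSet α).Subsingleton ↔ IsTrivial α := by
  constructor
  · exact fun h => h zero_mem_pSet one_mem_pSet
  · intro h
    have := h.subsingleton
    exact subsingleton_of_subsingleton

theorem disjoint_rad_preimage_neg (h : ¬ IsTrivial α) : Disjoint (Rad α) (MV.neg ⁻¹' Rad α) := by
  refine disjoint_left.2 fun x hx hnx => h ?_
  have oplus_self : MV.oplus x x = MV.one := by
    simpa only [MV.le, MV.nsmul, MV.oplus_zero, MV.neg_neg] using hnx 1
  have neg_eq_one : MV.neg x = MV.one := by
    simpa only [MV.le, MV.nsmul, MV.oplus_zero, oplus_self, MV.neg_one, MV.zero_oplus] using hx 2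
  have eq_zero : x = MV.zero := by rw [← MV.neg_neg x, neg_eq_one, MV.neg_one]
  rwa [eq_zero, MV.oplus_zero] at oplus_self

end Rad

section TrivialCodomain

variable {α β : Type*} [MV α] [MV β]

theorem bijOn_pSet_iff_of_isTrivial (f : α → β) (hβ : IsTrivial β) :
    BijOn f (PSet α) (PSet β) ↔ IsTrivial α := by
  have := hβ.subsingleton
  rw [bijOn_iff_subsingleton ⟨_, zero_mem_pSet⟩ ⟨_, zero_mem_pSet⟩, pSet_subsingleton_iff]

theorem bijOn_rad_iff_of_isTrivial (f : α → β) (hβ : IsTrivial β) :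
    BijOn f (Rad α) (Rad β) ↔ Rad α = {MV.zero} := by
  have := hβ.subsingleton
  rw [bijOn_iff_subsingleton ⟨_, zero_mem_rad⟩ ⟨_, zero_mem_rad⟩,
    subsingleton_iff_singleton zero_mem_rad]

end TrivialCodomain

namespace IsHom

variable {α β : Type*} [MV α] [MV β] {f : α → β}

theorem map_one (hf : IsHom f) : f MV.one = MV.one := by
  simp only [MV.one, hf.map_neg, hf.map_zero]

theorem map_ominus (hf : IsHom f) (x y : α) : f (MV.ominus x y) = MV.ominus (f x) (f y) := by
  simp only [MV.ominus, hf.map_neg, hf.map_oplus]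

theorem map_nsmul (hf : IsHom f) (n : ℕ) (a : α) : f (MV.nsmul n a) = MV.nsmul n (f a) := by
  induction n with
  | zero => exact hf.map_zero
  | succ n ih => rw [MV.nsmul, hf.map_oplus, ih, MV.nsmul]

theorem map_le (hf : IsHom f) {x y : α} (h : MV.le x y) : MV.le (f x) (f y) := by
  rw [MV.le, ← hf.map_neg, ← hf.map_oplus, h, hf.map_one]

theorem mapsTo_rad (hf : IsHom f) : MapsTo f (Rad α) (Rad β) := by
  intro a ha n
  rw [← hf.map_nsmul, ← hf.map_neg]
  exact hf.map_le (ha n)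

theorem bijOn_preimage_neg (hf : IsHom f) {s : Set α} {t : Set β} (h : BijOn f s t) :
    BijOn f (MV.neg ⁻¹' s) (MV.neg ⁻¹' t) := by
  refine ⟨fun x hx => ?_, fun x hx y hy hxy => ?_, fun z hz => ?_⟩
  · rw [mem_preimage, ← hf.map_neg]
    exact h.mapsTo hx
  · have hneg : MV.neg x = MV.neg y := h.injOn hx hy (by rw [hf.map_neg, hf.map_neg, hxy])
    rw [← MV.neg_neg x, hneg, MV.neg_neg]
  · obtain ⟨x, hx, hxz⟩ := h.surjOn hz
    refine ⟨MV.neg x, ?_, by rw [hf.map_neg, hxz, MV.neg_neg]⟩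
    rwa [mem_preimage, MV.neg_neg]

theorem bijOn_pSet_iff_of_not_isTrivial (hf : IsHom f) (hβ : ¬ IsTrivial β) :
    BijOn f (PSet α) (PSet β) ↔ BijOn f (Rad α) (Rad β) := by
  have hdisj := disjoint_rad_preimage_neg hβ
  constructor
  · intro h
    refine ⟨hf.mapsTo_rad, h.injOn.mono subset_union_left, fun b hb => ?_⟩
    obtain ⟨a, ha | ha, rfl⟩ := h.surjOn (Or.inl hb)
    · exact ⟨a, ha, rfl⟩
    · have hfa : MV.neg (f a) ∈ Rad β := hf.map_neg a ▸ hf.mapsTo_rad ha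
      exact (disjoint_left.1 hdisj hb hfa).elim
  · intro h
    have hneg := hf.bijOn_preimage_neg h
    have hinj : InjOn f (Rad α ∪ MV.neg ⁻¹' Rad α) :=
      (injOn_union ((hdisj.preimage f).mono h.mapsTo hneg.mapsTo)).2
        ⟨h.injOn, hneg.injOn, fun _ ha _ ha' => hdisj.ne_of_mem (h.mapsTo ha) (hneg.mapsTo ha')⟩
    exact h.union hneg hinj

theorem bijOn_rad_iff (hf : IsHom f) :
    BijOn f (Rad α) (Rad β) ↔
      BijOn f (PSet α) (PSet β) ∨ (Rad α = {MV.zero} ∧ ¬ IsTrivial α ∧ IsTrivial β) := by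
  by_cases hβ : IsTrivial β
  · rw [bijOn_rad_iff_of_isTrivial f hβ, bijOn_pSet_iff_of_isTrivial f hβ]
    have hα : IsTrivial α → Rad α = {MV.zero} := IsTrivial.rad_eq_singleton
    tauto
  · rw [hf.bijOn_pSet_iff_of_not_isTrivial hβ]
    tauto

end IsHom

namespace IsQuotientBy

variable {α β Q R : Type*} [MV α] [MV β] [MV Q] [MV R] {I : Set α} {J : Set β}
  {f : α → β} {q : α → Q} {r : β → R} {g : Q → R}

theorem map_eq_zero_iff (hq : IsQuotientBy I q) {x : α} : q x = MV.zero ↔ x ∈ I := by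
  rw [← hq.hom.map_zero, hq.eq_iff, MV.dist_zero]

theorem ominus_mem (hq : IsQuotientBy I q) {x y : α} (h : q x = q y) : MV.ominus x y ∈ I := by
  rw [← hq.map_eq_zero_iff, hq.hom.map_ominus, h, MV.ominus_self]

theorem injective_prodMk_iff (hq : IsQuotientBy I q) (hf : IsHom f) :
    Function.Injective (fun a => (f a, q a)) ↔ InjOn f I := by
  constructor
  · intro hinj a ha a' ha' h
    rw [← hq.map_eq_zero_iff] at ha ha'
    exact hinj (Prod.ext h (ha.trans ha'.symm))
  · intro hinj a a' h
    obtain ⟨hfa, hqa⟩ := Prod.mk.inj h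
    have ominus_eq_zero {x y : α} (hfxy : f x = f y) (hqxy : q x = q y) :
        MV.ominus x y = MV.zero := by
      refine hinj (hq.ominus_mem hqxy) (hq.map_eq_zero_iff.1 hq.hom.map_zero) ?_
      rw [hf.map_ominus, hfxy, MV.ominus_self, hf.map_zero]
    exact MV.eq_of_ominus_eq_zero (ominus_eq_zero hfa hqa) (ominus_eq_zero hfa.symm hqa.symm)

theorem exists_eq_of_surjOn (hq : IsQuotientBy I q) (hr : IsQuotientBy J r) (hf : IsHom f)
    (hsurj : SurjOn f I J) {a : α} {b : β} (h : r b = r (f a)) :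
    ∃ a', f a' = b ∧ q a' = q a := by
  obtain ⟨defect, hdefect, hfdefect⟩ := hsurj (hr.ominus_mem h)
  obtain ⟨excess, hexcess, hfexcess⟩ := hsurj (hr.ominus_mem h.symm)
  rw [← hq.map_eq_zero_iff] at hdefect hexcess
  refine ⟨MV.oplus (MV.ominus a excess) defect, ?_, ?_⟩
  · rw [hf.map_oplus, hf.map_ominus, hfdefect, hfexcess, MV.ominus_ominus_oplus_ominus]
  · rw [hq.hom.map_oplus, hq.hom.map_ominus, hdefect, hexcess, MV.ominus_zero, MV.oplus_zero]

theorem range_prodMk_eq_iff (hq : IsQuotientBy I q) (hr : IsQuotientBy J r) (hf : IsHom f)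
    (hcomm : g ∘ q = r ∘ f) :
    range (fun a => (f a, q a)) = {p : β × Q | r p.1 = g p.2} ↔ SurjOn f I J := by
  have hgq (a : α) : g (q a) = r (f a) := congrFun hcomm a
  constructor
  · intro hrange b hb
    have hg : g MV.zero = MV.zero := by
      rw [← hq.hom.map_zero, hgq, hf.map_zero, hr.hom.map_zero]
    have hmem : (b, MV.zero) ∈ {p : β × Q | r p.1 = g p.2} :=
      (hr.map_eq_zero_iff.2 hb).trans hg.symm
    obtain ⟨a, ha⟩ := hrange ▸ hmem
    obtain ⟨hfa, hqa⟩ := Prod.mk.inj ha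
    exact ⟨a, hq.map_eq_zero_iff.1 hqa, hfa⟩
  · refine fun hsurj => (range_subset_iff.2 fun a => (hgq a).symm).antisymm ?_
    rintro ⟨b, u⟩ (hbu : r b = g u)
    obtain ⟨a, rfl⟩ := hq.surj u
    obtain ⟨a', hfa', hqa'⟩ := hq.exists_eq_of_surjOn hr hf hsurj (hbu.trans (hgq a))
    exact ⟨a', Prod.ext hfa' hqa'⟩

end IsQuotientBy

/-- A homomorphism `f : A → B` is a trivial extension for the Galois structure
of the semisimple reflection — i.e. the canonical map
`A → {(b,u) ∈ B × S(A) : η_B b = S(f) u}`, `a ↦ (f a, [a])`, is an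
isomorphism — iff `P(f) : P(A) → P(B)` is an isomorphism, or `Rad(A) = {0}`,
`A` is nontrivial and `B` is trivial. -/
theorem trivial_extension_iff {α β SA SB : Type*} [MV α] [MV β] [MV SA] [MV SB]
    {f : α → β} (hf : IsHom f)
    {ηA : α → SA} (hηA : IsQuotientBy (Rad α) ηA)
    {ηB : β → SB} (hηB : IsQuotientBy (Rad β) ηB)
    {Sf : SA → SB} (hSf : IsHom Sf) (hnat : Sf ∘ ηA = ηB ∘ f) :
    (Function.Injective (fun a : α => ((f a, ηA a) : β × SA)) ∧
      Set.range (fun a : α => ((f a, ηA a) : β × SA))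
        = {p : β × SA | ηB p.1 = Sf p.2}) ↔
    (Set.BijOn f (PSet α) (PSet β) ∨
      (Rad α = ({MV.zero} : Set α) ∧ ¬ IsTrivial α ∧ IsTrivial β)) := by
  rw [hηA.injective_prodMk_iff hf, hηA.range_prodMk_eq_iff hηB hf hnat, ← hf.bijOn_rad_iff]
  exact (and_iff_right hf.mapsTo_rad).symm

end MVPaper
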